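/- Let P = ℂ[[x₁,…,xₙ]] with maximal ideal m and let 0 ≠ f ∈ m. For every k ∈ ℕ there exists m₀ ∈ ℕ such that: for every ℂ-algebra automorphism φ of P with φ(m) = m and φ(f) ∈ (f) + m^{m₀+1}, there exists a ℂ-algebra automorphism ψ of P with ψ(m) = m, ψ(f) ∈ (f), and φ(xⱼ) − ψ(xⱼ) ∈ m^{k+2} for all j. -/

import Mathlib

noncomputable section
set_option synthInstance.maxHeartbeats 1000000
set_option maxHeartbeats 1000000

/-- The maximal ideal `m = (x₁,…,xₙ)` of `ℂ[[x₁,…,xₙ]]`. -/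
def mIdeal (n : ℕ) : Ideal (MvPowerSeries (Fin n) ℂ) :=
  Ideal.span (Set.range (MvPowerSeries.X : Fin n → MvPowerSeries (Fin n) ℂ))

section PolynomialFamilies

variable {X V W W' : Type*} [AddCommGroup V] [Module ℂ V] [AddCommGroup W] [Module ℂ W]
  [AddCommGroup W'] [Module ℂ W']

/-- The families `X → V` which are finite sums of maps `x ↦ r x • v` with `r` in a given algebra
of functions on `X`. -/
def polyFamilies (R : Subalgebra ℂ (X → ℂ)) (V : Type*) [AddCommGroup V] [Module ℂ V] :
    AddSubmonoid (X → V) :=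
  AddSubmonoid.closure {p | ∃ r ∈ R, ∃ v : V, p = fun x => r x • v}

/-- The algebra of polynomial functions on the complex line. -/
def linePoly : Subalgebra ℂ (ℂ → ℂ) := (Polynomial.aeval (id : ℂ → ℂ)).range

variable {R : Subalgebra ℂ (X → ℂ)}

lemma smul_mem_polyFamilies {r : X → ℂ} (hr : r ∈ R) (v : V) :
    (fun x => r x • v) ∈ polyFamilies R V :=
  AddSubmonoid.subset_closure ⟨r, hr, v, rfl⟩

lemma const_mem_polyFamilies (v : V) : (fun _ : X => v) ∈ polyFamilies R V := by
  simpa using smul_mem_polyFamilies (R := R) (one_mem R) v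

lemma map_mem_polyFamilies (L : V →ₗ[ℂ] W) {p : X → V} (hp : p ∈ polyFamilies R V) :
    (fun x => L (p x)) ∈ polyFamilies R W := by
  induction hp using AddSubmonoid.closure_induction with
  | mem p hp =>
    obtain ⟨r, hr, v, rfl⟩ := hp
    simpa using smul_mem_polyFamilies hr (L v)
  | zero => simpa using const_mem_polyFamilies (R := R) (0 : W)
  | add p q _ _ hp hq =>
    simp only [Pi.add_apply, map_add]
    exact add_mem hp hq

lemma mem_of_mem_polyFamilies {p : X → ℂ} (hp : p ∈ polyFamilies R ℂ) : p ∈ R := by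
  induction hp using AddSubmonoid.closure_induction with
  | mem p hp =>
    obtain ⟨r, hr, v, rfl⟩ := hp
    convert R.smul_mem hr v using 1
    ext x
    simp [mul_comm]
  | zero => exact zero_mem R
  | add p q _ _ hp hq => exact add_mem hp hq

lemma map₂_mem_polyFamilies (B : V →ₗ[ℂ] W →ₗ[ℂ] W') {p : X → V} {q : X → W}
    (hp : p ∈ polyFamilies R V) (hq : q ∈ polyFamilies R W) :
    (fun x => B (p x) (q x)) ∈ polyFamilies R W' := by
  induction hp using AddSubmonoid.closure_induction with
  | zero => simpa using const_mem_polyFamilies (R := R) (0 : W')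
  | add p p' _ _ hp hp' =>
    simp only [Pi.add_apply, map_add, LinearMap.add_apply]
    exact add_mem hp hp'
  | mem p hp =>
    obtain ⟨r, hr, v, rfl⟩ := hp
    induction hq using AddSubmonoid.closure_induction with
    | zero => simpa using const_mem_polyFamilies (R := R) (0 : W')
    | add q q' _ _ hq hq' =>
      simp only [Pi.add_apply, map_add]
      exact add_mem hq hq'
    | mem q hq =>
      obtain ⟨s, hs, w, rfl⟩ := hq
      simpa [mul_smul] using smul_mem_polyFamilies (R := R) (mul_mem hs hr) (B v w)

lemma mul_mem_polyFamilies {A : Type*} [Ring A] [Algebra ℂ A] {p q : X → A}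
    (hp : p ∈ polyFamilies R A) (hq : q ∈ polyFamilies R A) :
    (fun x => p x * q x) ∈ polyFamilies R A :=
  map₂_mem_polyFamilies (LinearMap.mul ℂ A) hp hq

lemma sum_mem_polyFamilies {ι : Type*} {p : ι → X → V}
    (s : Finset ι) (hp : ∀ i ∈ s, p i ∈ polyFamilies R V) :
    (fun x => ∑ i ∈ s, p i x) ∈ polyFamilies R V := by
  convert sum_mem hp using 1
  ext x
  simp

lemma sub_mem_polyFamilies {p q : X → V} (hp : p ∈ polyFamilies R V)
    (hq : q ∈ polyFamilies R V) : (fun x => p x - q x) ∈ polyFamilies R V := by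
  simp only [sub_eq_add_neg]
  exact add_mem hp (map_mem_polyFamilies (-LinearMap.id) hq)

lemma mem_linePoly {s : ℂ → ℂ} (p : Polynomial ℂ) (h : ∀ t, p.eval t = s t) : s ∈ linePoly :=
  ⟨p, by ext t; simp [Polynomial.aeval_fn_apply, h]⟩

lemma exists_eval_of_mem_linePoly {s : ℂ → ℂ} (hs : s ∈ linePoly) :
    ∃ p : Polynomial ℂ, s = fun t => p.eval t := by
  obtain ⟨p, rfl⟩ := hs
  exact ⟨p, by ext t; simp [Polynomial.aeval_fn_apply]⟩

lemma comp_mem_polyFamilies {q : ℂ → V} (hq : q ∈ polyFamilies linePoly V) {r : X → ℂ}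
    (hr : r ∈ R) : (fun x => q (r x)) ∈ polyFamilies R V := by
  induction hq using AddSubmonoid.closure_induction with
  | zero => exact zero_mem (polyFamilies R V)
  | add q q' _ _ hq hq' => exact add_mem hq hq'
  | mem q hq =>
    obtain ⟨s, hs, v, rfl⟩ := hq
    obtain ⟨p, rfl⟩ := exists_eval_of_mem_linePoly hs
    refine smul_mem_polyFamilies (r := fun x => p.eval (r x)) ?_ v
    have h : Polynomial.aeval r p ∈ R := by
      have := (Polynomial.aeval (⟨r, hr⟩ : R) p).2
      rwa [← Subalgebra.coe_val, ← Polynomial.aeval_algHom_apply] at this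
    convert h using 1
    ext x
    simp [Polynomial.aeval_fn_apply]

/-- The natural numbers are Zariski dense in the complex line. -/
lemma mem_of_forall_natCast_mem {p : ℂ → V} (hp : p ∈ polyFamilies linePoly V)
    (S : Submodule ℂ V) (h : ∀ n : ℕ, p n ∈ S) (t : ℂ) : p t ∈ S := by
  by_contra ht
  obtain ⟨L, hL, hLS⟩ := Submodule.exists_le_ker_of_notMem ht
  obtain ⟨P, hP⟩ := exists_eval_of_mem_linePoly
    (mem_of_mem_polyFamilies (map_mem_polyFamilies L hp))
  have hP0 : P = 0 := by
    refine Polynomial.eq_zero_of_infinite_isRoot _ ?_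
    refine (Set.infinite_range_of_injective (Nat.cast_injective (R := ℂ))).mono ?_
    rintro _ ⟨n, rfl⟩
    have := congrFun hP n
    simp only [LinearMap.mem_ker.1 (hLS (h n))] at this
    exact this.symm
  have := congrFun hP t
  simp [hP0] at this
  exact hL this

lemma eq_of_forall_natCast_eq {p q : ℂ → V} (hp : p ∈ polyFamilies linePoly V)
    (hq : q ∈ polyFamilies linePoly V) (h : ∀ n : ℕ, p n = q n) (t : ℂ) : p t = q t := by
  have := mem_of_forall_natCast_mem (sub_mem_polyFamilies hp hq) ⊥ (by simp [h]) t
  simpa [sub_eq_zero] using this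

/-- The powers of a unipotent element are interpolated by a polynomial family. -/
lemma exists_polyFamilies_eq_pow {A : Type*} [Ring A] [Algebra ℂ A] {a : A} {r : ℕ}
    (ha : (a - 1) ^ r = 0) : ∃ q ∈ polyFamilies linePoly A, ∀ n : ℕ, q n = a ^ n := by
  refine ⟨fun t => ∑ l ∈ Finset.range r,
    (((l.factorial : ℂ)⁻¹ • descPochhammer ℂ l).eval t) • (a - 1) ^ l,
    sum_mem_polyFamilies _ fun l _ => smul_mem_polyFamilies (mem_linePoly _ fun _ => rfl) _,
    fun n => ?_⟩
  have hc : ∀ l : ℕ, ((l.factorial : ℂ)⁻¹ • descPochhammer ℂ l).eval (n : ℂ) = n.choose l := by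
    intro l
    rw [Polynomial.eval_smul, descPochhammer_eval_eq_descFactorial,
      Nat.descFactorial_eq_factorial_mul_choose]
    push_cast
    rw [smul_eq_mul, inv_mul_cancel_left₀ (by exact_mod_cast l.factorial_ne_zero)]
  simp only [hc]
  have h1 : a ^ n = ∑ l ∈ Finset.range (n + 1), (n.choose l : ℂ) • (a - 1) ^ l := by
    conv_lhs => rw [← sub_add_cancel a 1]
    rw [(Commute.one_right _).add_pow]
    refine Finset.sum_congr rfl fun l _ => ?_
    simp [Algebra.smul_def, (Nat.cast_commute (n.choose l) ((a - 1) ^ l)).eq]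
  rw [h1]
  have e1 := Finset.sum_subset (f := fun l => (n.choose l : ℂ) • (a - 1) ^ l)
    (Finset.range_mono (le_max_left r (n + 1))) (by
      intro l _ hl
      simp only [Finset.mem_range, not_lt] at hl
      simp [pow_eq_zero_of_le hl ha])
  have e2 := Finset.sum_subset (f := fun l => (n.choose l : ℂ) • (a - 1) ^ l)
    (Finset.range_mono (le_max_right r (n + 1))) (by
      intro l _ hl
      simp only [Finset.mem_range, not_lt] at hl
      simp [Nat.choose_eq_zero_of_lt hl])
  exact e1.trans e2.symm

end PolynomialFamilies

section UnipotentOrbits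

open Module

variable {X V : Type*} [AddCommGroup V] [Module ℂ V] {R : Subalgebra ℂ (X → ℂ)}
  {F : ℕ → Submodule ℂ V} {r : ℕ}
  {G : Submonoid (End ℂ V)}

/-- `G` acts trivially on the successive quotients of the finite filtration `F`, and it is closed
under polynomial interpolation. -/
structure IsUnipotent (F : ℕ → Submodule ℂ V) (r : ℕ) (G : Submonoid (End ℂ V)) : Prop where
  eq_top : F 0 = ⊤
  eq_bot : F r = ⊥
  antitone : Antitone F
  sub_mem : ∀ τ ∈ G, ∀ i, ∀ a ∈ F i, τ a - a ∈ F (i + 1)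
  interpolation : ∀ q ∈ polyFamilies linePoly (End ℂ V), (∀ n : ℕ, q n ∈ G) → ∀ t, q t ∈ G

lemma sub_one_pow_apply_mem {τ : End ℂ V} (hτ : ∀ i, ∀ a ∈ F i, τ a - a ∈ F (i + 1))
    {i : ℕ} {a : V} (ha : a ∈ F i) (l : ℕ) : ((τ - 1) ^ l) a ∈ F (i + l) := by
  induction l with
  | zero => simpa using ha
  | succ l ih =>
    rw [pow_succ', End.mul_apply]
    exact hτ _ _ ih

lemma exists_interpolation (H : IsUnipotent F r G) {τ : End ℂ V} (hτ : τ ∈ G) :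
    ∃ q ∈ polyFamilies linePoly (End ℂ V), (∀ n : ℕ, q n = τ ^ n) ∧ ∀ t, q t ∈ G := by
  have hnil : (τ - 1) ^ r = 0 := by
    ext a
    have := sub_one_pow_apply_mem (H.sub_mem τ hτ) (i := 0) (a := a) (by simp [H.eq_top]) r
    simpa [H.eq_bot] using this
  obtain ⟨q, hq, hqn⟩ := exists_polyFamilies_eq_pow hnil
  exact ⟨q, hq, hqn, H.interpolation q hq fun n => hqn n ▸ pow_mem hτ n⟩

lemma exists_left_inverse (H : IsUnipotent F r G) {τ : End ℂ V} (hτ : τ ∈ G) :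
    ∃ τ' ∈ G, τ' * τ = 1 := by
  obtain ⟨q, hq, hqn, hqG⟩ := exists_interpolation H hτ
  refine ⟨q (-1), hqG _, ?_⟩
  have h := mem_of_forall_natCast_mem (p := fun t => q (t + 1) - q t * τ) (sub_mem_polyFamilies
      (comp_mem_polyFamilies hq (r := fun t => t + 1)
        (mem_linePoly (.X + 1) (by simp)))
      (mul_mem_polyFamilies hq (const_mem_polyFamilies τ))) ⊥ (by
        intro n
        have := hqn (n + 1)
        push_cast at this
        simp [hqn, this, pow_succ]) (-1)
  have h1 := hqn 0
  simp only [Nat.cast_zero, pow_zero] at h1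
  simp only [neg_add_cancel, h1, Submodule.mem_bot, sub_eq_zero] at h
  exact h.symm

/-- The translations of `v` modulo `F (i + 1)` realized by elements of `G` fixing `v` modulo
`F i`. -/
def translations (H : IsUnipotent F r G) (v : V) (i : ℕ) : Submodule ℂ V where
  carrier := {e | e ∈ F i ∧ ∃ q ∈ polyFamilies linePoly (End ℂ V), ∀ t, q t ∈ G ∧
    q t v - v - t • e ∈ F (i + 1)}
  zero_mem' := ⟨zero_mem _, fun _ => 1, const_mem_polyFamilies _, by simp⟩
  add_mem' := by
    rintro e e' ⟨he, q, hq, hqt⟩ ⟨he', q', hq', hqt'⟩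
    refine ⟨add_mem he he', _, mul_mem_polyFamilies hq hq', fun t =>
      ⟨mul_mem (hqt t).1 (hqt' t).1, ?_⟩⟩
    have h1 := H.sub_mem _ (hqt t).1 i _ ((F i).smul_mem t he')
    have h2 := H.sub_mem _ (hqt t).1 (i + 1) _ (hqt' t).2
    have h3 := (hqt t).2
    have h4 := (hqt' t).2
    have h5 := add_mem (add_mem h1 (H.antitone (Nat.le_succ _) h2)) (add_mem h3 h4)
    convert h5 using 1
    simp only [map_sub, End.mul_apply, smul_add]
    abel
  smul_mem' := by
    rintro c e ⟨he, q, hq, hqt⟩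
    refine ⟨(F i).smul_mem c he, fun t => q (t * c), comp_mem_polyFamilies hq
      (r := fun t => t * c) (mem_linePoly (.X * .C c)
        fun t => by rw [Polynomial.eval_mul, Polynomial.eval_X, Polynomial.eval_C]),
      fun t => ⟨(hqt _).1, ?_⟩⟩
    simpa [mul_smul] using (hqt (t * c)).2

lemma mem_translations (H : IsUnipotent F r G) (v : V) (i : ℕ) {e : V} (he : e ∈ F i)
    {τ : End ℂ V} (hτ : τ ∈ G)
    (hτv : τ v - v - e ∈ F (i + 1)) : e ∈ translations H v i := by
  obtain ⟨q, hq, hqn, hqG⟩ := exists_interpolation H hτ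
  refine ⟨he, q, hq, fun t => ⟨hqG t, ?_⟩⟩
  refine mem_of_forall_natCast_mem (p := fun t => q t v - v - t • e) ?_ (F (i + 1)) ?_ t
  · refine sub_mem_polyFamilies (sub_mem_polyFamilies
      (map_mem_polyFamilies (LinearMap.applyₗ v) hq) (const_mem_polyFamilies v))
      (smul_mem_polyFamilies (r := fun t => t) ?_ e)
    exact mem_linePoly .X (by simp)
  · intro n
    simp only [hqn]
    induction n with
    | zero => simp
    | succ n ih =>
      have h1 := H.sub_mem τ hτ (i + 1) _ ih
      have h2 := H.sub_mem τ hτ i _ ((F i).smul_mem (n : ℂ) he)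
      convert add_mem (add_mem (add_mem (H.antitone (Nat.le_succ _) h1) h2) ih) hτv using 1
      simp only [pow_succ', End.mul_apply, map_sub]
      push_cast
      rw [add_smul, one_smul]
      abel

/-- A unipotent group which is closed under polynomial interpolation has Zariski closed orbits:
belonging to an orbit is a polynomial condition on the parameters of a polynomial family. -/
theorem exists_equations_of_orbit (H : IsUnipotent F r G) (v : V) {g : X → V}
    (hg : g ∈ polyFamilies R V) :
    ∃ T : Set (X → ℂ), T ⊆ R ∧ ∀ x, (∃ τ ∈ G, τ v = g x) ↔ ∀ h ∈ T, h x = 0 := by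
  have key : ∀ i, ∃ s ∈ polyFamilies R (End ℂ V), (∀ x, s x ∈ G) ∧
      ∃ T : Set (X → ℂ), T ⊆ R ∧ ∀ x, ((∃ τ ∈ G, g x - τ v ∈ F i) ↔ ∀ h ∈ T, h x = 0) ∧
        ((∃ τ ∈ G, g x - τ v ∈ F i) → g x - s x v ∈ F i) := by
    intro i
    induction i with
    | zero =>
      refine ⟨fun _ => 1, const_mem_polyFamilies _, fun _ => one_mem G, ∅, by simp, fun x => ?_⟩
      simpa [H.eq_top] using ⟨1, one_mem G⟩
    | succ i ih =>
      obtain ⟨s, hs, hsG, T, hTR, hT⟩ := ih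
      let W := translations H v i
      obtain ⟨W', hW'⟩ := Submodule.exists_isCompl W
      let π : V →ₗ[ℂ] V := W.subtype ∘ₗ W.projectionOnto W' hW'
      have hπ : ∀ a, π a ∈ W := fun a => by simp [π]
      have hπW : ∀ a ∈ W, π a = a := fun a ha => by
        have := Submodule.projectionOnto_apply_left hW' ⟨a, ha⟩
        simp [π, this]
      have hlift : ∀ p ∈ polyFamilies R V, ∃ q ∈ polyFamilies R (End ℂ V), ∀ x, q x ∈ G ∧
          q x v - v - π (p x) ∈ F (i + 1) := by
        intro p hp
        induction hp using AddSubmonoid.closure_induction with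
        | zero => exact ⟨fun _ => 1, const_mem_polyFamilies _, by simp⟩
        | mem p hp =>
          obtain ⟨ρ, hρ, w, rfl⟩ := hp
          obtain ⟨-, q, hq, hqt⟩ := hπ w
          exact ⟨_, comp_mem_polyFamilies hq hρ, fun x => by simpa using hqt (ρ x)⟩
        | add p p' _ _ hp hp' =>
          obtain ⟨q, hq, hqx⟩ := hp
          obtain ⟨q', hq', hqx'⟩ := hp'
          refine ⟨_, mul_mem_polyFamilies hq hq', fun x => ⟨mul_mem (hqx x).1 (hqx' x).1, ?_⟩⟩
          have h1 := H.sub_mem _ (hqx x).1 i _ (hπ (p' x)).1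
          have h2 := H.sub_mem _ (hqx x).1 (i + 1) _ (hqx' x).2
          convert add_mem (add_mem h1 (H.antitone (Nat.le_succ _) h2))
            (add_mem (hqx x).2 (hqx' x).2)
            using 1
          simp only [map_sub, map_add, End.mul_apply, Pi.add_apply]
          abel
      have happ : ∀ {p : X → End ℂ V}, p ∈ polyFamilies R (End ℂ V) →
          (fun x => p x v) ∈ polyFamilies R V := fun hp =>
        map_mem_polyFamilies (LinearMap.applyₗ v) hp
      have hρ : (fun x => g x - s x v) ∈ polyFamilies R V := sub_mem_polyFamilies hg (happ hs)
      obtain ⟨q, hq, hqx⟩ := hlift _ hρ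
      have hiff : ∀ x, (∃ τ ∈ G, g x - τ v ∈ F (i + 1)) ↔
          g x - s x v ∈ F i ∧ g x - s x v ∈ W := by
        intro x
        constructor
        · rintro ⟨τ, hτ, hτx⟩
          have h1 := (hT x).2 ⟨τ, hτ, H.antitone (Nat.le_succ _) hτx⟩
          refine ⟨h1, ?_⟩
          obtain ⟨σ, hσ, hσs⟩ := exists_left_inverse H (hsG x)
          have hσs' : σ (s x v) = v := by rw [← End.mul_apply, hσs, End.one_apply]
          refine mem_translations H v i h1 (mul_mem hσ hτ) ?_
          have h2 := H.sub_mem σ hσ (i + 1) _ hτx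
          have h3 := H.sub_mem σ hσ i _ h1
          convert sub_mem (sub_mem h3 (H.antitone (Nat.le_succ _) h2)) hτx using 1
          simp only [map_sub, End.mul_apply, hσs']
          abel
        · rintro ⟨h1, h2⟩
          refine ⟨s x * q x, mul_mem (hsG x) (hqx x).1, ?_⟩
          have h3 := (hqx x).2
          rw [hπW _ h2] at h3
          have h4 := H.sub_mem _ (hsG x) (i + 1) _ h3
          have h5 := H.sub_mem _ (hsG x) i _ h1
          convert neg_mem (add_mem (add_mem h5 (H.antitone (Nat.le_succ _) h4)) h3) using 1
          simp only [map_sub, End.mul_apply]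
          abel
      refine ⟨fun x => s x * q x, mul_mem_polyFamilies hs hq,
        fun x => mul_mem (hsG x) (hqx x).1,
        T ∪ Set.range fun (L : V →ₗ[ℂ] ℂ) x => L ((g x - s x v) - π (g x - s x v)), ?_, ?_⟩
      · rintro h (hh | ⟨L, rfl⟩)
        · exact hTR hh
        · exact mem_of_mem_polyFamilies (map_mem_polyFamilies L
            (sub_mem_polyFamilies hρ (map_mem_polyFamilies π hρ)))
      · intro x
        constructor
        · rw [hiff]
          constructor
          · rintro ⟨h1, h2⟩ h (hh | ⟨L, rfl⟩)
            · exact (hT x).1.1 ⟨s x, hsG x, h1⟩ h hh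
            · simp [hπW _ h2]
          · intro h
            refine ⟨(hT x).2 ((hT x).1.2 fun h' hh' => h h' (Or.inl hh')), ?_⟩
            have h2 : (g x - s x v) - π (g x - s x v) = 0 := by
              rw [← Module.forall_dual_apply_eq_zero_iff ℂ]
              exact fun L => h _ (Or.inr ⟨L, rfl⟩)
            rw [sub_eq_zero.1 h2]
            exact hπ _
        · intro hx
          obtain ⟨h1, h2⟩ := (hiff x).1 hx
          have h3 := (hqx x).2
          rw [hπW _ h2] at h3
          have h4 := H.sub_mem _ (hsG x) (i + 1) _ h3
          have h5 := H.sub_mem _ (hsG x) i _ h1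
          convert neg_mem (add_mem (add_mem h5 (H.antitone (Nat.le_succ _) h4)) h3) using 1
          simp only [map_sub, End.mul_apply]
          abel
  obtain ⟨_, _, _, T, hTR, hT⟩ := key r
  refine ⟨T, hTR, fun x => ?_⟩
  rw [← (hT x).1]
  simp only [H.eq_bot, Submodule.mem_bot, sub_eq_zero]
  exact exists_congr fun τ => and_congr_right' eq_comm

end UnipotentOrbits

section TwistedEndomorphisms

open Module

variable {Q : Type*} [CommRing Q] [Algebra ℂ Q] {M : Ideal Q} {K r : ℕ}

/-- The linear maps `g ↦ u * σ g`, where `u ≡ 1` modulo `M` and `σ` is an algebra endomorphism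
which is trivial modulo `M ^ K`. Here `u` is the image of `1`. -/
def twistedEnds (M : Ideal Q) {K : ℕ} (hK : K ≠ 0) : Submonoid (End ℂ Q) where
  carrier := {τ | τ 1 - 1 ∈ M ∧ (∀ g h, τ (g * h) * τ 1 = τ g * τ h) ∧
    ∀ g, τ g - g * τ 1 ∈ M ^ K}
  one_mem' := by simp
  mul_mem' := by
    rintro τ τ' ⟨h1, h2, h3⟩ ⟨h1', h2', h3'⟩
    have hM : ∀ g ∈ M, τ g ∈ M := fun g hg => by
      simpa using add_mem (Ideal.pow_le_self hK (h3 g)) (M.mul_mem_right (τ 1) hg)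
    have hMK : ∀ g ∈ M ^ K, τ g ∈ M ^ K := fun g hg => by
      simpa using add_mem (h3 g) ((M ^ K).mul_mem_right (τ 1) hg)
    refine ⟨?_, fun g h => ?_, fun g => ?_⟩
    · simpa using add_mem (hM _ h1') h1
    · simp only [End.mul_apply]
      rw [← h2, h2', h2]
    · have e1 := hMK _ (h3' g)
      have e2 := h3 (g * τ' 1)
      have e3 := (M ^ K).mul_mem_left g (h3 (τ' 1))
      convert sub_mem (add_mem e1 e2) e3 using 1
      simp only [End.mul_apply, map_sub]
      ring

variable {hK : K ≠ 0}

lemma isUnit_apply_one (hM : M ^ r = ⊥) {τ : End ℂ Q} (hτ : τ ∈ twistedEnds M hK) :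
    IsUnit (τ 1) := by
  have : IsNilpotent (τ 1 - 1) := ⟨r, by simpa [hM] using Ideal.pow_mem_pow hτ.1 r⟩
  simpa using this.isUnit_one_add

lemma sub_mul_apply_one_mem (h2 : 2 ≤ K) {τ : End ℂ Q}
    (hτ : τ ∈ twistedEnds M hK) (hu : IsUnit (τ 1)) (i : ℕ) :
    ∀ a ∈ M ^ i, τ a - a * τ 1 ∈ M ^ (i + 1) := by
  induction i with
  | zero =>
    intro a _
    simpa using Ideal.pow_le_self hK (hτ.2.2 a)
  | succ i ih =>
    intro a ha
    rw [pow_succ'] at ha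
    induction ha using Submodule.mul_induction_on' with
    | add a _ b _ ha hb =>
      convert add_mem ha hb using 1
      rw [map_add]
      ring
    | mem_mul_mem x hx b hb =>
      rw [← (M ^ (i + 1 + 1)).unit_mul_mem_iff_mem hu]
      have e1 : (τ x - x * τ 1) * τ b ∈ M ^ (i + 1 + 1) := by
        rw [add_assoc, add_comm, pow_add]
        have hb' : τ b ∈ M ^ i := by
          simpa using add_mem (Ideal.pow_le_pow_right (Nat.le_succ _) (ih b hb))
            ((M ^ i).mul_mem_right (τ 1) hb)
        simpa [pow_add, mul_comm] using
          Ideal.mul_mem_mul (Ideal.pow_le_pow_right h2 (hτ.2.2 x)) hb'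
      have e2 : (x * τ 1) * (τ b - b * τ 1) ∈ M ^ (i + 1 + 1) := by
        rw [pow_succ']
        exact Ideal.mul_mem_mul (M.mul_mem_right _ hx) (ih b hb)
      convert add_mem e1 e2 using 1
      linear_combination hτ.2.1 x b

lemma isUnipotent_twistedEnds (h2 : 2 ≤ K) (hM : M ^ r = ⊥) :
    IsUnipotent (fun i => (M ^ i).restrictScalars ℂ) r (twistedEnds M hK) where
  eq_top := by simp
  eq_bot := by simp [hM]
  antitone := fun i j hij => Ideal.pow_le_pow_right hij
  sub_mem := by
    intro τ hτ i a ha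
    have e1 := sub_mul_apply_one_mem h2 hτ (isUnit_apply_one hM hτ) i a ha
    have e2 : a * (τ 1 - 1) ∈ M ^ (i + 1) := by
      rw [pow_succ]
      exact Ideal.mul_mem_mul ha hτ.1
    have e3 := add_mem e1 e2
    rw [show τ a - a * τ 1 + a * (τ 1 - 1) = τ a - a by ring] at e3
    exact e3
  interpolation := by
    intro q hq hqn t
    have happ : ∀ g : Q, (fun t => q t g) ∈ polyFamilies linePoly Q := fun g =>
      map_mem_polyFamilies (LinearMap.applyₗ g) hq
    refine ⟨?_, fun g h => ?_, fun g => ?_⟩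
    · exact mem_of_forall_natCast_mem (p := fun t => q t 1 - 1)
        (sub_mem_polyFamilies (happ 1) (const_mem_polyFamilies 1)) (M.restrictScalars ℂ)
        (fun n => (hqn n).1) t
    · exact eq_of_forall_natCast_eq (p := fun t => q t (g * h) * q t 1)
        (mul_mem_polyFamilies (happ _) (happ _)) (mul_mem_polyFamilies (happ _) (happ _))
        (fun n => (hqn n).2.1 g h) t
    · exact mem_of_forall_natCast_mem (p := fun t => q t g - g * q t 1)
        (sub_mem_polyFamilies (happ g)
          (mul_mem_polyFamilies (const_mem_polyFamilies g) (happ 1)))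
        ((M ^ K).restrictScalars ℂ) (fun n => (hqn n).2.2 g) t

/-- The algebra endomorphism underlying a twisted endomorphism. -/
lemma exists_algHom_of_mem_twistedEnds (hM : M ^ r = ⊥) {τ : End ℂ Q}
    (hτ : τ ∈ twistedEnds M hK) :
    ∃ σ : Q →ₐ[ℂ] Q, (∀ g, τ g = τ 1 * σ g) ∧ ∀ g, σ g - g ∈ M ^ K := by
  obtain ⟨u, hu⟩ := isUnit_apply_one hM hτ
  have hmul : ∀ g h, (↑u⁻¹ * τ (g * h) : Q) = (↑u⁻¹ * τ g) * (↑u⁻¹ * τ h) := by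
    intro g h
    have e := hτ.2.1 g h
    rw [← hu] at e
    have e' : (u : Q) * ↑u⁻¹ = 1 := u.mul_inv
    linear_combination (↑u⁻¹ * ↑u⁻¹ : Q) * e - (↑u⁻¹ * τ (g * h)) * e'
  refine ⟨AlgHom.ofLinearMap ((LinearMap.mulLeft ℂ (↑u⁻¹ : Q)) ∘ₗ τ) ?_ ?_, fun g => ?_,
    fun g => ?_⟩
  · simp [← hu]
  · simpa using hmul
  · simp [← hu]
  · have e := (M ^ K).mul_mem_left (↑u⁻¹ : Q) (hτ.2.2 g)
    rw [← hu] at e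
    convert e using 1
    have e' : (u : Q) * ↑u⁻¹ = 1 := u.mul_inv
    simp only [AlgHom.ofLinearMap_apply, LinearMap.comp_apply, LinearMap.mulLeft_apply]
    linear_combination g * e'

end TwistedEndomorphisms

section PowerSeries

open MvPowerSeries

variable {n : ℕ}

local notation "ℙ" => MvPowerSeries (Fin n) ℂ

lemma exists_limit {g : ℕ → ℙ} (hg : ∀ i, g (i + 1) - g i ∈ mIdeal n ^ i) :
    ∃ L, ∀ i, L - g i ∈ mIdeal n ^ i := by
  have : IsAdicComplete (mIdeal n) ℙ := by unfold mIdeal; infer_instance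
  have hmono : ∀ {i j}, i ≤ j → g j - g i ∈ mIdeal n ^ i := by
    intro i j hij
    induction j, hij using Nat.le_induction with
    | base => simp
    | succ j hij ih => simpa using add_mem (Ideal.pow_le_pow_right hij (hg j)) ih
  obtain ⟨L, hL⟩ := IsPrecomplete.prec (I := mIdeal n) (M := ℙ) inferInstance (f := g)
    fun {i j} hij => by
      rw [SModEq.sub_mem, ← neg_mem_iff]
      simpa using hmono hij
  refine ⟨L, fun i => ?_⟩
  have := hL i
  rw [SModEq.sub_mem, ← neg_mem_iff] at this
  simpa using this

lemma X_mem_mIdeal (j : Fin n) : (X j : ℙ) ∈ mIdeal n := Ideal.subset_span ⟨j, rfl⟩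

lemma le_order_of_mem_mIdeal {g : ℙ} (hg : g ∈ mIdeal n) : 1 ≤ g.order := by
  rw [one_le_order_iff_constCoeff_eq_zero]
  have : mIdeal n ≤ RingHom.ker (constantCoeff (σ := Fin n) (R := ℂ)) :=
    Ideal.span_le.2 (by rintro _ ⟨j, rfl⟩; simp [RingHom.mem_ker])
  exact this hg

lemma le_order_of_mem_pow {N : ℕ} {g : ℙ} (hg : g ∈ mIdeal n ^ N) : (N : ℕ∞) ≤ g.order := by
  induction N generalizing g with
  | zero => simp
  | succ N ih =>
    rw [pow_succ] at hg
    induction hg using Submodule.mul_induction_on' with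
    | mem_mul_mem a ha b hb =>
      push_cast
      exact (add_le_add (ih ha) (le_order_of_mem_mIdeal hb)).trans le_order_mul
    | add a _ b _ ha hb => exact (le_min ha hb).trans min_order_le_add

lemma eq_zero_of_forall_mem_pow {g : ℙ} (hg : ∀ i, g ∈ mIdeal n ^ i) : g = 0 := by
  rw [← order_eq_top_iff, ENat.eq_top_iff_forall_ge]
  exact fun i => le_order_of_mem_pow (hg i)

lemma coe_mem_pow {N : ℕ} {p : MvPolynomial (Fin n) ℂ}
    (hp : p ∈ MvPolynomial.idealOfVars (Fin n) ℂ ^ N) : (p : ℙ) ∈ mIdeal n ^ N := by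
  have h := Ideal.mem_map_of_mem (MvPolynomial.coeToMvPowerSeries.ringHom (σ := Fin n) (R := ℂ)) hp
  rw [Ideal.map_pow] at h
  refine Ideal.pow_right_mono ?_ N h
  rw [MvPolynomial.idealOfVars, Ideal.map_span, Ideal.span_le]
  rintro _ ⟨_, ⟨j, rfl⟩, rfl⟩
  simpa using X_mem_mIdeal j

lemma mem_pow_of_coeff_eq_zero {N : ℕ} {g : ℙ} (hg : ∀ d, d.degree < N → coeff d g = 0) :
    g ∈ mIdeal n ^ N := by
  have htr : ∀ i, (truncTotal i g : ℙ) ∈ mIdeal n ^ N := fun i => by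
    refine coe_mem_pow (MvPolynomial.mem_pow_idealOfVars_iff' _ _ |>.2 fun d hd => ?_)
    rw [coeff_truncTotal_eq_ite, hg d hd, ite_self]
  have hsub : ∀ i, (truncTotal (i + 1) g : ℙ) - truncTotal i g ∈ mIdeal n ^ i := fun i => by
    have e := map_sub (MvPolynomial.coeToMvPowerSeries.ringHom (σ := Fin n) (R := ℂ))
      (truncTotal (i + 1) g) (truncTotal i g)
    simp only [MvPolynomial.coeToMvPowerSeries.ringHom_apply] at e
    rw [← e]
    refine coe_mem_pow (MvPolynomial.mem_pow_idealOfVars_iff' _ _ |>.2 fun d hd => ?_)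
    rw [MvPolynomial.coeff_sub, coeff_truncTotal_eq_ite, coeff_truncTotal_eq_ite, if_pos hd,
      if_pos (hd.trans (Nat.lt_succ_self i)), sub_self]
  obtain ⟨L, hL⟩ := exists_limit (g := fun i => (truncTotal i g : ℙ)) hsub
  have hLg : g = L := by
    ext d
    have h := coeff_of_lt_order (d := d) (lt_of_lt_of_le (by exact_mod_cast Nat.lt_succ_self _)
      (le_order_of_mem_pow (hL (d.degree + 1))))
    rw [map_sub, sub_eq_zero, MvPolynomial.coeff_coe, coeff_truncTotal_eq_ite,
      if_pos (Nat.lt_succ_self _)] at h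
    exact h.symm
  rw [hLg]
  simpa using add_mem (hL N) (htr N)

lemma mem_pow_iff_le_order {N : ℕ} {g : ℙ} : g ∈ mIdeal n ^ N ↔ (N : ℕ∞) ≤ g.order :=
  ⟨le_order_of_mem_pow, fun h => mem_pow_of_coeff_eq_zero fun _ hd =>
    coeff_of_lt_order (lt_of_lt_of_le (by exact_mod_cast hd) h)⟩

lemma sub_truncTotal_mem_pow (N : ℕ) (g : ℙ) : g - (truncTotal N g : ℙ) ∈ mIdeal n ^ N := by
  refine mem_pow_of_coeff_eq_zero fun d hd => ?_
  rw [map_sub, MvPolynomial.coeff_coe, coeff_truncTotal_eq_ite, if_pos hd, sub_self]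

lemma sub_C_mem_mIdeal (g : ℙ) : g - C (constantCoeff g) ∈ mIdeal n := by
  rw [← pow_one (mIdeal n)]
  refine mem_pow_of_coeff_eq_zero fun d hd => ?_
  obtain rfl : d = 0 := by simpa [Finsupp.degree_eq_zero_iff] using hd
  simp

lemma exists_algHom_X_eq {y : Fin n → ℙ} (hy : ∀ j, y j ∈ mIdeal n) :
    ∃ ψ : ℙ →ₐ[ℂ] ℙ, ∀ j, ψ (X j) = y j := by
  have h : HasSubst y := hasSubst_of_constantCoeff_zero fun j =>
    one_le_order_iff_constCoeff_eq_zero.1 (le_order_of_mem_mIdeal (hy j))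
  exact ⟨substAlgHom h, substAlgHom_X h⟩

variable {A : Type*} [CommRing A] [Algebra ℂ A]

lemma algHom_apply_mem_pow {ψ : ℙ →ₐ[ℂ] A} {I : Ideal A} (h : ∀ j, ψ (X j) ∈ I) {i : ℕ} {g : ℙ}
    (hg : g ∈ mIdeal n ^ i) : ψ g ∈ I ^ i := by
  have h' := Ideal.mem_map_of_mem ψ hg
  rw [Ideal.map_pow] at h'
  refine Ideal.pow_right_mono ?_ i h'
  rw [mIdeal, Ideal.map_span, Ideal.span_le]
  rintro _ ⟨_, ⟨j, rfl⟩, rfl⟩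
  exact h j

lemma algHom_sub_mem {ψ ψ' : ℙ →ₐ[ℂ] A} {I J : Ideal A} {r : ℕ} (hr : I ^ r ≤ J)
    (h : ∀ j, ψ (X j) ∈ I) (h' : ∀ j, ψ' (X j) ∈ I) (hJ : ∀ j, ψ (X j) - ψ' (X j) ∈ J) (g : ℙ) :
    ψ g - ψ' g ∈ J := by
  have hpoly : ∀ p : MvPolynomial (Fin n) ℂ, ψ p - ψ' p ∈ J := by
    intro p
    have e : ((Ideal.Quotient.mkₐ ℂ J).comp ψ).comp (MvPolynomial.coeToMvPowerSeries.algHom ℂ) =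
        ((Ideal.Quotient.mkₐ ℂ J).comp ψ').comp (MvPolynomial.coeToMvPowerSeries.algHom ℂ) := by
      refine MvPolynomial.algHom_ext fun j => ?_
      simpa [MvPolynomial.coeToMvPowerSeries.algHom_apply] using Ideal.Quotient.eq.2 (hJ j)
    have e' := DFunLike.congr_fun e p
    simpa [MvPolynomial.coeToMvPowerSeries.algHom_apply, Ideal.Quotient.eq] using e'
  have h1 := hr (algHom_apply_mem_pow h (sub_truncTotal_mem_pow r g))
  have h2 := hr (algHom_apply_mem_pow h' (sub_truncTotal_mem_pow r g))
  convert add_mem (sub_mem h1 h2) (hpoly (truncTotal r g)) using 1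
  rw [map_sub, map_sub]
  ring

/-- Algebra endomorphisms of the power series ring that agree modulo a power of the maximal ideal
on the variables agree modulo that power. -/
lemma algHom_sub_mem_pow {ψ ψ' : ℙ →ₐ[ℂ] ℙ} {r : ℕ}
    (h : ∀ j, ψ (X j) ∈ mIdeal n) (h' : ∀ j, ψ' (X j) ∈ mIdeal n)
    (hJ : ∀ j, ψ (X j) - ψ' (X j) ∈ mIdeal n ^ r) (g : ℙ) : ψ g - ψ' g ∈ mIdeal n ^ r :=
  algHom_sub_mem le_rfl h h' hJ g

lemma algHom_sub_self_mem {σ : ℙ →ₐ[ℂ] ℙ} (hσ : ∀ g, σ g - g ∈ mIdeal n ^ 2) {i : ℕ} {g : ℙ}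
    (hg : g ∈ mIdeal n ^ i) : σ g - g ∈ mIdeal n ^ (i + 1) := by
  have h : σ.toLinearMap ∈ twistedEnds (mIdeal n) two_ne_zero :=
    ⟨by simp, by simp, by simpa using hσ⟩
  simpa using sub_mul_apply_one_mem le_rfl h (by simp) i g hg

lemma bijective_of_sub_self_mem {σ : ℙ →ₐ[ℂ] ℙ} (hσ : ∀ g, σ g - g ∈ mIdeal n ^ 2) :
    Function.Bijective σ := by
  constructor
  · rw [injective_iff_map_eq_zero]
    intro g hg
    refine eq_zero_of_forall_mem_pow fun i => ?_
    induction i with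
    | zero => simp
    | succ i ih => simpa [hg] using algHom_sub_self_mem hσ ih
  · intro g
    let a : ℕ → ℙ := fun i => Nat.rec 0 (fun _ b => b + (g - σ b)) i
    have ha : ∀ i, a (i + 1) = a i + (g - σ (a i)) := fun i => rfl
    have hres : ∀ i, g - σ (a i) ∈ mIdeal n ^ i := by
      intro i
      induction i with
      | zero => simp
      | succ i ih =>
        rw [← neg_mem_iff]
        convert algHom_sub_self_mem hσ ih using 1
        rw [ha, map_add]
        ring
    obtain ⟨L, hL⟩ := exists_limit (g := a) fun i => by simpa [ha] using hres i
    refine ⟨L, sub_eq_zero.1 (eq_zero_of_forall_mem_pow fun i => ?_)⟩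
    have h1 : σ (L - a i) ∈ mIdeal n ^ i := by
      simpa using add_mem (Ideal.pow_le_pow_right (Nat.le_succ i)
        (algHom_sub_self_mem hσ (hL i))) (hL i)
    convert sub_mem h1 (hres i) using 1
    rw [map_sub]
    ring

/-- An endomorphism which is the identity modulo `m ^ 2` is an automorphism. -/
lemma exists_algEquiv_of_sub_self_mem {σ : ℙ →ₐ[ℂ] ℙ} {k : ℕ}
    (hσ : ∀ g, σ g - g ∈ mIdeal n ^ (k + 2)) :
    ∃ e : ℙ ≃ₐ[ℂ] ℙ, (∀ g, e g = σ g) ∧ ∀ g, e.symm g - g ∈ mIdeal n ^ (k + 2) := by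
  have h2 : ∀ g, σ g - g ∈ mIdeal n ^ 2 := fun g => Ideal.pow_le_pow_right (by omega) (hσ g)
  let e := AlgEquiv.ofBijective σ (bijective_of_sub_self_mem h2)
  refine ⟨e, fun g => rfl, fun g => ?_⟩
  have h := hσ (e.symm g)
  rw [show σ (e.symm g) = g from e.apply_symm_apply g, ← neg_mem_iff] at h
  simpa using h

/-- The power series ring is separated for the `m`-adic topology modulo a principal ideal. -/
lemma mem_span_of_forall_mem_sup {f : ℙ} (hf : f ≠ 0) {w : ℙ}
    (hw : ∀ i, w ∈ Ideal.span {f} ⊔ mIdeal n ^ i) : w ∈ Ideal.span {f} := by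
  obtain ⟨d, hd⟩ : ∃ d : ℕ, f.order = d := by
    obtain ⟨d, hd⟩ := ENat.ne_top_iff_exists.1 (fun h => hf (order_eq_top_iff.1 h))
    exact ⟨d, hd.symm⟩
  have hq : ∀ i, ∃ q, w - q * f ∈ mIdeal n ^ (d + i) := fun i => by
    obtain ⟨a, ha, b, hb, hab⟩ := Submodule.mem_sup.1 (hw (d + i))
    obtain ⟨q, rfl⟩ := Ideal.mem_span_singleton'.1 ha
    exact ⟨q, by rwa [← hab, add_sub_cancel_left]⟩
  choose q hq using hq
  obtain ⟨L, hL⟩ := exists_limit (g := q) fun i => by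
    have h : (q (i + 1) - q i) * f ∈ mIdeal n ^ (d + i) := by
      convert sub_mem (hq i) (Ideal.pow_le_pow_right (by omega) (hq (i + 1))) using 1
      ring
    rw [mem_pow_iff_le_order, order_mul, hd, add_comm d, Nat.cast_add] at h
    rw [mem_pow_iff_le_order]
    exact (ENat.add_le_add_iff_right (ENat.natCast_ne_top d)).1 h
  refine Ideal.mem_span_singleton'.2
    ⟨L, (sub_eq_zero.1 (eq_zero_of_forall_mem_pow fun i => ?_)).symm⟩
  convert sub_mem (Ideal.pow_le_pow_right (Nat.le_add_left i d) (hq i))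
    (Ideal.mul_mem_right f _ (hL i)) using 1
  ring

/-- `w` lies in the orbit of `f` modulo `m ^ (N + 1)` under the automorphisms that are trivial
modulo `m ^ (k + 2)` together with the multiplications by units with constant term `1`. -/
def Aligned (k N : ℕ) (f w : ℙ) : Prop :=
  ∃ σ : ℙ →ₐ[ℂ] ℙ, (∀ g, σ g - g ∈ mIdeal n ^ (k + 2)) ∧
    ∃ u, u - 1 ∈ mIdeal n ∧ w - u * σ f ∈ mIdeal n ^ (N + 1)

lemma Aligned.mono {k N N' : ℕ} (hN : N ≤ N') {f w : ℙ} (h : Aligned k N' f w) :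
    Aligned k N f w := by
  obtain ⟨σ, hσ, u, hu, hw⟩ := h
  exact ⟨σ, hσ, u, hu, Ideal.pow_le_pow_right (by omega) hw⟩

lemma apply_X_mem_mIdeal {σ : ℙ →ₐ[ℂ] ℙ} {k : ℕ} (hσ : ∀ g, σ g - g ∈ mIdeal n ^ (k + 2))
    (j : Fin n) : σ (X j) ∈ mIdeal n := by
  simpa using add_mem (Ideal.pow_le_self (by omega) (hσ (X j))) (X_mem_mIdeal j)

lemma aligned_iff (k N : ℕ) (f w : ℙ) : Aligned k N f w ↔
    ∃ τ ∈ twistedEnds ((mIdeal n).map (Ideal.Quotient.mk (mIdeal n ^ (N + 1))))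
      (show k + 2 ≠ 0 by omega),
      τ (Ideal.Quotient.mk _ f) = Ideal.Quotient.mk (mIdeal n ^ (N + 1)) w := by
  set I := mIdeal n ^ (N + 1) with hI
  set M := (mIdeal n).map (Ideal.Quotient.mk I) with hM
  constructor
  · rintro ⟨σ, hσ, u, hu, hw⟩
    let σ' : (ℙ ⧸ I) →ₐ[ℂ] (ℙ ⧸ I) := Ideal.quotientMapₐ I σ fun g hg =>
      algHom_apply_mem_pow (apply_X_mem_mIdeal hσ) hg
    have hσ' : ∀ g, σ' (Ideal.Quotient.mk I g) = Ideal.Quotient.mk I (σ g) := fun g => rfl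
    refine ⟨LinearMap.mulLeft ℂ (Ideal.Quotient.mk I u) ∘ₗ σ'.toLinearMap, ⟨?_, fun g h => ?_,
      fun g => ?_⟩, ?_⟩
    · simpa using Ideal.mem_map_of_mem (Ideal.Quotient.mk I) hu
    · simp only [LinearMap.comp_apply, LinearMap.mulLeft_apply, AlgHom.toLinearMap_apply, map_mul,
        map_one]
      ring
    · obtain ⟨g, rfl⟩ := Ideal.Quotient.mk_surjective g
      rw [hM, ← Ideal.map_pow]
      have e := Ideal.mem_map_of_mem (Ideal.Quotient.mk I)
        (Ideal.mul_mem_left _ u (hσ g))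
      convert e using 1
      simp only [LinearMap.comp_apply, LinearMap.mulLeft_apply, AlgHom.toLinearMap_apply, map_mul,
        map_one, hσ', map_sub]
      ring
    · simp only [LinearMap.comp_apply, LinearMap.mulLeft_apply, AlgHom.toLinearMap_apply, hσ']
      rw [← map_mul]
      exact (Ideal.Quotient.eq.2 hw).symm
  · rintro ⟨τ, hτ, hw⟩
    have hMr : M ^ (N + 1) = ⊥ := by rw [hM, ← Ideal.map_pow, Ideal.map_quotient_self]
    obtain ⟨σ, hτσ, hσ⟩ := exists_algHom_of_mem_twistedEnds hMr hτ
    have hlift : ∀ i, ∀ a ∈ M ^ i, ∃ e ∈ mIdeal n ^ i, Ideal.Quotient.mk I e = a := by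
      intro i a ha
      rw [hM, ← Ideal.map_pow] at ha
      exact (Ideal.mem_map_iff_of_surjective _ Ideal.Quotient.mk_surjective).1 ha
    obtain ⟨a, ha, ha'⟩ := hlift 1 (τ 1 - 1) (by simpa using hτ.1)
    choose e he he' using fun j : Fin n => hlift _ _ (hσ (Ideal.Quotient.mk I (X j)))
    have hy : ∀ j, X j + e j ∈ mIdeal n := fun j =>
      add_mem (X_mem_mIdeal j) (Ideal.pow_le_self (by omega) (he j))
    obtain ⟨ψ, hψ⟩ := exists_algHom_X_eq hy
    have hψσ : ∀ g, σ (Ideal.Quotient.mk I g) = Ideal.Quotient.mk I (ψ g) := by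
      intro g
      have h1 : ∀ j, Ideal.Quotient.mk I (ψ (X j)) = σ (Ideal.Quotient.mk I (X j)) := fun j => by
        rw [hψ, map_add, he']
        ring
      have h2 : ∀ j, Ideal.Quotient.mk I (ψ (X j)) ∈ M := fun j => by
        rw [hψ]
        exact Ideal.mem_map_of_mem _ (hy j)
      have := algHom_sub_mem (ψ := σ.comp (Ideal.Quotient.mkₐ ℂ I))
        (ψ' := (Ideal.Quotient.mkₐ ℂ I).comp ψ) (J := ⊥) hMr.le
        (fun j => by simpa [h1] using h2 j) (fun j => by simpa using h2 j)
        (fun j => by simp [h1]) g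
      simpa [sub_eq_zero] using this
    refine ⟨ψ, fun g => algHom_sub_mem_pow (ψ' := AlgHom.id ℂ ℙ) (fun j => by simpa [hψ] using hy j)
      X_mem_mIdeal (fun j => by simpa [hψ] using he j) g, 1 + a, by simpa using ha, ?_⟩
    rw [← hI, ← Ideal.Quotient.eq, ← hw, hτσ, hψσ, map_mul, map_add, ha']
    simp

/-- In a family depending polynomially on finitely many parameters, being in the orbit of `f`
modulo a sufficiently high power of the maximal ideal suffices for all powers. -/
lemma exists_aligned_of_aligned {Y : Type*} {R : Subalgebra ℂ (Y → ℂ)} [IsNoetherianRing R]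
    (k : ℕ) (f : ℙ) {g : Y → ℙ}
    (hg : ∀ N, (fun x => Ideal.Quotient.mk (mIdeal n ^ N) (g x)) ∈
      polyFamilies R (ℙ ⧸ mIdeal n ^ N)) :
    ∃ N₀, ∀ N x, Aligned k N₀ f (g x) → Aligned k N f (g x) := by
  let V : ℕ →o Ideal R :=
    { toFun := fun N =>
        { carrier := {h | ∀ x, Aligned k N f (g x) → h.1 x = 0}
          add_mem' := fun ha hb x hx => by
            simp [ha x hx, hb x hx]
          zero_mem' := fun x _ => rfl
          smul_mem' := fun c a ha x hx => by
            simp [ha x hx] }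
      monotone' := fun N N' hN h hh x hx => hh x (hx.mono hN) }
  obtain ⟨N₀, hN₀⟩ := monotone_stabilizes_iff_noetherian.2 ‹IsNoetherianRing R› V
  refine ⟨N₀, fun N x hx => ?_⟩
  obtain hN | hN := le_total N N₀
  · exact hx.mono hN
  have hM : (mIdeal n).map (Ideal.Quotient.mk (mIdeal n ^ (N + 1))) ^ (N + 1) = ⊥ := by
    rw [← Ideal.map_pow, Ideal.map_quotient_self]
  obtain ⟨T, hTR, hT⟩ := exists_equations_of_orbit
    (isUnipotent_twistedEnds (hK := show k + 2 ≠ 0 by omega) (by omega) hM)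
    (Ideal.Quotient.mk _ f) (hg (N + 1))
  simp only [← aligned_iff] at hT
  refine (hT x).2 fun h hh => ?_
  have hmem : (⟨h, hTR hh⟩ : R) ∈ V N := fun z hz => (hT z).1 hz h hh
  rw [← hN₀ N hN] at hmem
  exact hmem x hx

lemma mk_apply_mem_polyFamilies {Y : Type*} {R : Subalgebra ℂ (Y → ℂ)} {y : Fin n → Y → ℙ}
    (hy : ∀ j, y j ∈ polyFamilies R ℙ) (hym : ∀ j x, y j x ∈ mIdeal n) {ψ : Y → ℙ →ₐ[ℂ] ℙ}
    (hψ : ∀ j x, ψ x (X j) = y j x) (g : ℙ) (N : ℕ) :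
    (fun x => Ideal.Quotient.mk (mIdeal n ^ N) (ψ x g)) ∈ polyFamilies R (ℙ ⧸ mIdeal n ^ N) := by
  have hpoly : ∀ p : MvPolynomial (Fin n) ℂ, (fun x => ψ x p) ∈ polyFamilies R ℙ := by
    intro p
    induction p using MvPolynomial.induction_on with
    | C a =>
      have e : ∀ x, ψ x (MvPolynomial.C a : MvPolynomial (Fin n) ℂ) =
          algebraMap ℂ ℙ a := fun x => by
        rw [MvPolynomial.coe_C]
        exact (ψ x).commutes a
      simpa only [e] using const_mem_polyFamilies _
    | add p q hp hq =>
      simp only [MvPolynomial.coe_add, map_add]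
      exact add_mem hp hq
    | mul_X p j hp =>
      simp only [MvPolynomial.coe_mul, MvPolynomial.coe_X, map_mul, hψ]
      exact mul_mem_polyFamilies hp (hy j)
  have e : ∀ x, Ideal.Quotient.mk (mIdeal n ^ N) (ψ x g) =
      Ideal.Quotient.mkₐ ℂ (mIdeal n ^ N) (ψ x (truncTotal N g : ℙ)) := fun x => by
    refine Ideal.Quotient.eq.2 ?_
    rw [← map_sub]
    exact algHom_apply_mem_pow (fun j => by rw [hψ]; exact hym j x) (sub_truncTotal_mem_pow N g)
  simp only [e]
  exact map_mem_polyFamilies (Ideal.Quotient.mkₐ ℂ (mIdeal n ^ N)).toLinearMap (hpoly _)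

lemma symm_apply_mem_mIdeal {φ : ℙ ≃ₐ[ℂ] ℙ} (hφ : ∀ g, g ∈ mIdeal n ↔ φ g ∈ mIdeal n) {g : ℙ}
    (hg : g ∈ mIdeal n) : φ.symm g ∈ mIdeal n := by
  simpa [hφ (φ.symm g)] using hg

lemma symm_apply_mem_pow {φ : ℙ ≃ₐ[ℂ] ℙ} (hφ : ∀ g, g ∈ mIdeal n ↔ φ g ∈ mIdeal n) {i : ℕ}
    {g : ℙ} (hg : g ∈ mIdeal n ^ i) : φ.symm g ∈ mIdeal n ^ i :=
  algHom_apply_mem_pow (ψ := φ.symm.toAlgHom)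
    (fun j => symm_apply_mem_mIdeal hφ (X_mem_mIdeal j)) hg

lemma mem_sup_pow_of_le {I : Ideal ℙ} {i j : ℕ} (hij : i ≤ j) {g : ℙ}
    (hg : g ∈ I ⊔ mIdeal n ^ j) : g ∈ I ⊔ mIdeal n ^ i :=
  (sup_le_sup_left (Ideal.pow_le_pow_right hij) I : I ⊔ mIdeal n ^ j ≤ _) hg

lemma mem_mIdeal_iff_of_sub_mem {φ φ' : ℙ ≃ₐ[ℂ] ℙ} {k : ℕ}
    (hφ : ∀ g, g ∈ mIdeal n ↔ φ g ∈ mIdeal n) (h : ∀ g, φ' g - φ g ∈ mIdeal n ^ (k + 2)) (g : ℙ) :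
    g ∈ mIdeal n ↔ φ' g ∈ mIdeal n := by
  have h' : φ' g - φ g ∈ mIdeal n := Ideal.pow_le_self (by omega) (h g)
  rw [hφ, ← add_mem_cancel_right (y := φ g) h', add_sub_cancel]

/-- If `φ` preserves `(f)` up to high order and `ψ` agrees with `φ` up to order `k + 2`, then
`ψ f` is, up to a constant, in the orbit of `f`. -/
lemma exists_aligned {φ : ℙ ≃ₐ[ℂ] ℙ} {ψ : ℙ →ₐ[ℂ] ℙ} {k N : ℕ} {f : ℙ}
    (hφ : ∀ g, g ∈ mIdeal n ↔ φ g ∈ mIdeal n) (hψ : ∀ g, ψ g - φ g ∈ mIdeal n ^ (k + 2))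
    (hN : f.order ≤ N) (hf : f ≠ 0) (h : φ f ∈ Ideal.span {f} ⊔ mIdeal n ^ (N + 1)) :
    ∃ b : ℂ, b ≠ 0 ∧ Aligned k N f (b • ψ f) := by
  obtain ⟨_, hs, e, he, hφf⟩ := Submodule.mem_sup.1 h
  obtain ⟨u, rfl⟩ := Ideal.mem_span_singleton'.1 hs
  let σ := ψ.comp φ.symm.toAlgHom
  have hσ : ∀ g, σ g - g ∈ mIdeal n ^ (k + 2) := fun g => by
    simpa [σ] using hψ (φ.symm g)
  have hu := sub_C_mem_mIdeal u
  have hc : constantCoeff u ≠ 0 := by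
    intro hc
    obtain ⟨d, hd⟩ := ENat.ne_top_iff_exists.1 (fun h => hf (order_eq_top_iff.1 h))
    have hdN : d ≤ N := by
      rw [← hd] at hN
      exact_mod_cast hN
    have h1 : u * f ∈ mIdeal n ^ (d + 1) := by
      rw [pow_succ']
      exact Ideal.mul_mem_mul (by simpa [hc] using hu) (mem_pow_iff_le_order.2 hd.le)
    have h2 : φ f ∈ mIdeal n ^ (d + 1) := by
      rw [← hφf]
      exact add_mem h1 (Ideal.pow_le_pow_right (by omega) he)
    have h3 := symm_apply_mem_pow hφ h2
    rw [AlgEquiv.symm_apply_apply, mem_pow_iff_le_order, ← hd] at h3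
    norm_cast at h3
    omega
  refine ⟨(constantCoeff u)⁻¹, inv_ne_zero hc, σ, hσ, (constantCoeff u)⁻¹ • σ u, ?_, ?_⟩
  · have h1 : σ u - C (constantCoeff u) ∈ mIdeal n := by
      simpa using add_mem (Ideal.pow_le_self (by omega) (hσ u)) hu
    have h2 := Submodule.smul_of_tower_mem (mIdeal n) (constantCoeff u)⁻¹ h1
    have e : (constantCoeff u)⁻¹ • (C (constantCoeff u) : ℙ) = 1 := by
      rw [smul_eq_C_mul, ← map_mul, inv_mul_cancel₀ hc, map_one]
    rwa [smul_sub, e] at h2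
  · have h1 : σ e ∈ mIdeal n ^ (N + 1) := algHom_apply_mem_pow (apply_X_mem_mIdeal hσ) he
    have h2 : ψ f = σ u * σ f + σ e := by
      rw [← map_mul, ← map_add, hφf]
      simp [σ]
    rw [h2, smul_mul_assoc, ← smul_sub, add_sub_cancel_left]
    exact Submodule.smul_of_tower_mem _ _ h1

/-- If `ψ f` is, up to a constant, in the orbit of `f`, then an automorphism to which `ψ` is close
can be modified to one preserving `(f)` up to high order. -/
lemma exists_algEquiv_of_aligned {φ : ℙ ≃ₐ[ℂ] ℙ} {ψ : ℙ →ₐ[ℂ] ℙ} {k N : ℕ} {f : ℙ}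
    (hψ : ∀ g, ψ g - φ g ∈ mIdeal n ^ (k + 2)) {b : ℂ} (hb : b ≠ 0)
    (h : Aligned k N f (b • ψ f)) :
    ∃ φ' : ℙ ≃ₐ[ℂ] ℙ, φ' f ∈ Ideal.span {f} ⊔ mIdeal n ^ (N + 1) ∧
      ∀ g, φ' g - φ g ∈ mIdeal n ^ (k + 2) := by
  obtain ⟨σ, hσ, u, -, hw⟩ := h
  have hσ' : ∀ g, ψ.comp φ.symm.toAlgHom g - g ∈ mIdeal n ^ (k + 2) := fun g => by
    simpa using hψ (φ.symm g)
  obtain ⟨e, he, hes⟩ := exists_algEquiv_of_sub_self_mem hσ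
  have hesym : ∀ g ∈ mIdeal n ^ (N + 1), e.symm g ∈ mIdeal n ^ (N + 1) := fun g hg =>
    algHom_apply_mem_pow (ψ := e.symm.toAlgHom) (apply_X_mem_mIdeal hes) hg
  obtain ⟨e', he', -⟩ := exists_algEquiv_of_sub_self_mem hσ'
  have he'φ : ∀ g, e' (φ g) = ψ g := fun g => by simp [he']
  refine ⟨(φ.trans e').trans e.symm, ?_, fun g => ?_⟩
  · have h1 := Submodule.smul_of_tower_mem _ b⁻¹ (hesym _ hw)
    rw [map_sub, map_smul, smul_sub, inv_smul_smul₀ hb, map_mul, ← he, e.symm_apply_apply] at h1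
    have h2 : b⁻¹ • (e.symm u * f) ∈ Ideal.span {f} :=
      Submodule.smul_of_tower_mem _ _ (Ideal.mul_mem_left _ _ (Ideal.mem_span_singleton_self f))
    refine Submodule.mem_sup.2 ⟨_, h2, _, h1, ?_⟩
    simp [he'φ]
  · convert add_mem (hes (ψ g)) (hψ g) using 1
    simp [he'φ]

/-- An automorphism preserving `(f)` up to sufficiently high order can be modified beyond its
`(k + 1)`-jet so as to preserve `(f)` up to any given order. -/
lemma exists_algEquiv_mem_sup {f : ℙ} (hf : f ≠ 0) (k : ℕ) :
    ∃ N₀, ∀ φ : ℙ ≃ₐ[ℂ] ℙ, (∀ g, g ∈ mIdeal n ↔ φ g ∈ mIdeal n) →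
      φ f ∈ Ideal.span {f} ⊔ mIdeal n ^ (N₀ + 1) → ∀ N,
      ∃ φ' : ℙ ≃ₐ[ℂ] ℙ, (∀ g, g ∈ mIdeal n ↔ φ' g ∈ mIdeal n) ∧
        φ' f ∈ Ideal.span {f} ⊔ mIdeal n ^ (N + 1) ∧ ∀ g, φ' g - φ g ∈ mIdeal n ^ (k + 2) := by
  let Z := {φ : ℙ ≃ₐ[ℂ] ℙ // ∀ g, g ∈ mIdeal n ↔ φ g ∈ mIdeal n}
  let s : Finset (Fin n →₀ ℕ) := (Finsupp.finite_of_degree_lt (k + 2)).toFinset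
  let y : Fin n → Z → ℙ := fun j φ => (truncTotal (k + 2) (φ.1 (X j)) : ℙ)
  have hyφ : ∀ j φ, y j φ - φ.1 (X j) ∈ mIdeal n ^ (k + 2) := fun j φ => by
    rw [← neg_mem_iff, neg_sub]
    exact sub_truncTotal_mem_pow _ _
  have hφm : ∀ j (φ : Z), φ.1 (X j) ∈ mIdeal n := fun j φ => (φ.2 _).1 (X_mem_mIdeal j)
  have hym : ∀ j φ, y j φ ∈ mIdeal n := fun j φ => by
    simpa using add_mem (Ideal.pow_le_self (by omega) (hyφ j φ)) (hφm j φ)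
  choose ψ hψ using fun φ => exists_algHom_X_eq fun j => hym j φ
  have hψφ : ∀ φ g, ψ φ g - φ.1 g ∈ mIdeal n ^ (k + 2) := fun φ g =>
    algHom_sub_mem_pow (ψ' := φ.1.toAlgHom) (fun j => by rw [hψ]; exact hym j φ)
      (fun j => hφm j φ) (fun j => by rw [hψ]; exact hyφ j φ) g
  let c : Fin n → (Fin n →₀ ℕ) → ℂ × Z → ℂ := fun j d x => coeff d (x.2.1 (X j))
  let S : Set (ℂ × Z → ℂ) := insert Prod.fst (Set.image2 c Set.univ s)
  have hS : S.Finite := ((Set.toFinite _).image2 _ s.finite_toSet).insert _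
  let R := Algebra.adjoin ℂ S
  have : Algebra.FiniteType ℂ R :=
    (Subalgebra.fg_iff_finiteType _).1 (Subalgebra.fg_def.2 ⟨S, hS, rfl⟩)
  have : IsNoetherianRing R := Algebra.FiniteType.isNoetherianRing ℂ R
  have hy : ∀ j, (fun x => y j x.2) ∈ polyFamilies R ℙ := fun j => by
    have e : (fun x => y j x.2) = fun x => ∑ d ∈ s, c j d x • monomial d (1 : ℂ) := by
      ext1 x
      have e1 : y j x.2 =
        MvPolynomial.coeToMvPowerSeries.ringHom (truncTotal (k + 2) (x.2.1 (X j))) := rfl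
      rw [e1, truncTotal, truncFinset_apply, map_sum]
      refine Finset.sum_congr rfl fun d _ => ?_
      rw [MvPolynomial.coeToMvPowerSeries.ringHom_apply, MvPolynomial.coe_monomial, ← map_smul,
        smul_eq_mul, mul_one]
    rw [e]
    exact sum_mem_polyFamilies s fun d hd => smul_mem_polyFamilies (Algebra.subset_adjoin
      (Set.mem_insert_of_mem _ (Set.mem_image2_of_mem (Set.mem_univ j) hd))) _
  have hb : (Prod.fst : ℂ × Z → ℂ) ∈ polyFamilies R ℂ := by
    simpa using smul_mem_polyFamilies (Algebra.subset_adjoin (Set.mem_insert Prod.fst _)) (1 : ℂ)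
  obtain ⟨N₁, hN₁⟩ := exists_aligned_of_aligned (R := R) k f (g := fun x => x.1 • ψ x.2 f)
    fun N => map₂_mem_polyFamilies (LinearMap.lsmul ℂ (ℙ ⧸ mIdeal n ^ N)) hb
      (mk_apply_mem_polyFamilies hy (fun j x => hym j x.2) (fun j x => hψ x.2 j) f N)
  obtain ⟨d, hd⟩ := ENat.ne_top_iff_exists.1 (fun h => hf (order_eq_top_iff.1 h))
  refine ⟨max N₁ d, fun φ hφ hφf N => ?_⟩
  obtain ⟨b, hb, hA⟩ := exists_aligned hφ (hψφ ⟨φ, hφ⟩)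
    (by rw [← hd]; exact_mod_cast le_max_right _ _) hf hφf
  obtain ⟨φ', h1, h2⟩ := exists_algEquiv_of_aligned (hψφ ⟨φ, hφ⟩) hb
    (hN₁ N (b, ⟨φ, hφ⟩) (hA.mono (le_max_left _ _)))
  exact ⟨φ', mem_mIdeal_iff_of_sub_mem hφ h2, h1, h2⟩

end PowerSeries

/-- Let `P = ℂ[[x₁,…,xₙ]]` with maximal ideal `m` and `0 ≠ f ∈ m`. For every `k ∈ ℕ` there
exists `m₀ ∈ ℕ` such that: for every ℂ-algebra automorphism `φ` of `P` with `φ(m) = m` and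
`φ(f) ∈ (f) + m^{m₀+1}`, there exists a ℂ-algebra automorphism `ψ` of `P` with `ψ(m) = m`,
`ψ(f) ∈ (f)`, and `φ(xⱼ) − ψ(xⱼ) ∈ m^{k+2}` for all `j`. -/
theorem autLog_approximation {n : ℕ} (hn : 0 < n)
    (f : MvPowerSeries (Fin n) ℂ) (hf0 : f ≠ 0) (hfm : f ∈ mIdeal n) (k : ℕ) :
    ∃ m₀ : ℕ, ∀ φ : MvPowerSeries (Fin n) ℂ ≃ₐ[ℂ] MvPowerSeries (Fin n) ℂ,
      (∀ g, g ∈ mIdeal n ↔ φ g ∈ mIdeal n) →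
      φ f ∈ Ideal.span {f} ⊔ mIdeal n ^ (m₀ + 1) →
      ∃ ψ : MvPowerSeries (Fin n) ℂ ≃ₐ[ℂ] MvPowerSeries (Fin n) ℂ,
        (∀ g, g ∈ mIdeal n ↔ ψ g ∈ mIdeal n) ∧
        ψ f ∈ Ideal.span {f} ∧
        ∀ j, φ (MvPowerSeries.X j) - ψ (MvPowerSeries.X j) ∈ mIdeal n ^ (k + 2) := by
  obtain ⟨ν, hν⟩ : ∃ ν : ℕ → ℕ, (∀ i, i ≤ ν i) ∧ ∀ i,
      ∀ φ : MvPowerSeries (Fin n) ℂ ≃ₐ[ℂ] MvPowerSeries (Fin n) ℂ,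
      (∀ g, g ∈ mIdeal n ↔ φ g ∈ mIdeal n) → φ f ∈ Ideal.span {f} ⊔ mIdeal n ^ (ν i + 1) → ∀ N,
      ∃ φ' : MvPowerSeries (Fin n) ℂ ≃ₐ[ℂ] MvPowerSeries (Fin n) ℂ,
        (∀ g, g ∈ mIdeal n ↔ φ' g ∈ mIdeal n) ∧ φ' f ∈ Ideal.span {f} ⊔ mIdeal n ^ (N + 1) ∧
        ∀ g, φ' g - φ g ∈ mIdeal n ^ (k + i + 2) := by
    choose μ hμ using fun i => exists_algEquiv_mem_sup hf0 (k + i)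
    refine ⟨fun i => max (μ i) i, fun i => le_max_right _ _, fun i φ hφ hφf =>
      hμ i φ hφ (mem_sup_pow_of_le ?_ hφf)⟩
    simp
  refine ⟨ν 0, fun φ hφ hφf => ?_⟩
  let T : ℕ → Type := fun i => {θ : MvPowerSeries (Fin n) ℂ ≃ₐ[ℂ] MvPowerSeries (Fin n) ℂ //
    (∀ g, g ∈ mIdeal n ↔ θ g ∈ mIdeal n) ∧ θ f ∈ Ideal.span {f} ⊔ mIdeal n ^ (ν i + 1)}
  have hstep : ∀ i (θ : T i), ∃ θ' : T (i + 1), ∀ g, θ'.1 g - θ.1 g ∈ mIdeal n ^ (k + i + 2) :=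
    fun i θ => by
      obtain ⟨θ', h1, h2, h3⟩ := hν.2 i θ.1 θ.2.1 θ.2.2 (ν (i + 1))
      exact ⟨⟨θ', h1, h2⟩, h3⟩
  choose next hnext using hstep
  let θ : ∀ i, T i := fun i => Nat.rec ⟨φ, hφ, hφf⟩ next i
  have hθ : ∀ i g, (θ (i + 1)).1 g - (θ i).1 g ∈ mIdeal n ^ (k + i + 2) := fun i g =>
    hnext i (θ i) g
  choose y hy using fun j : Fin n => exists_limit (g := fun i => (θ i).1 (MvPowerSeries.X j))
    fun i => Ideal.pow_le_pow_right (by omega) (hθ i _)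
  have hyθ : ∀ j i, y j - (θ i).1 (MvPowerSeries.X j) ∈ mIdeal n ^ (k + i + 2) := by
    have aux : ∀ j i l, (θ (i + l)).1 (MvPowerSeries.X j) - (θ i).1 (MvPowerSeries.X j) ∈
        mIdeal n ^ (k + i + 2) := by
      intro j i l
      induction l with
      | zero => simp
      | succ l ih =>
        have h := Ideal.pow_le_pow_right (by omega : k + i + 2 ≤ k + (i + l) + 2)
          (hθ (i + l) (MvPowerSeries.X j))
        rw [← sub_add_sub_cancel _ ((θ (i + l)).1 (MvPowerSeries.X j))]
        exact add_mem h ih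
    intro j i
    have h1 := Ideal.pow_le_pow_right (by omega : k + i + 2 ≤ i + (k + 2)) (hy j (i + (k + 2)))
    simpa using add_mem h1 (aux j i (k + 2))
  have hθm : ∀ i j, (θ i).1 (MvPowerSeries.X j) ∈ mIdeal n := fun i j =>
    ((θ i).2.1 _).1 (X_mem_mIdeal j)
  have hym : ∀ j, y j ∈ mIdeal n := fun j => by
    simpa using add_mem (Ideal.pow_le_self (by omega) (hyθ j 0)) (hθm 0 j)
  obtain ⟨ψ, hψ⟩ := exists_algHom_X_eq hym
  have hψθ : ∀ i g, ψ g - (θ i).1 g ∈ mIdeal n ^ (k + i + 2) := fun i g =>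
    algHom_sub_mem_pow (ψ' := (θ i).1.toAlgHom) (fun j => by rw [hψ]; exact hym j) (hθm i)
      (fun j => by rw [hψ]; exact hyθ j i) g
  have hψφ : ∀ g, ψ g - φ g ∈ mIdeal n ^ (k + 2) := hψθ 0
  obtain ⟨e, he, -⟩ := exists_algEquiv_of_sub_self_mem (σ := ψ.comp φ.symm.toAlgHom) (k := k)
    fun g => by simpa using hψφ (φ.symm g)
  have heφ : ∀ g, φ.trans e g = ψ g := fun g => by simp [he]
  have hclose : ∀ g, φ.trans e g - φ g ∈ mIdeal n ^ (k + 2) := fun g => by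
    rw [heφ]
    exact hψφ g
  refine ⟨φ.trans e, mem_mIdeal_iff_of_sub_mem hφ hclose, ?_, fun j => ?_⟩
  · rw [heφ]
    refine mem_span_of_forall_mem_sup hf0 fun i => ?_
    have h1 : ψ f - (θ i).1 f ∈ Ideal.span {f} ⊔ mIdeal n ^ i :=
      Ideal.mem_sup_right (Ideal.pow_le_pow_right (by omega) (hψθ i f))
    have h2 : (θ i).1 f ∈ Ideal.span {f} ⊔ mIdeal n ^ i :=
      mem_sup_pow_of_le ((hν.1 i).trans (Nat.le_succ _)) (θ i).2.2
    simpa using add_mem h1 h2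
  · rw [← neg_mem_iff, neg_sub]
    exact hclose _
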